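/- The function t ↦ p_{2t}(4,t) − p_{2t−1}(4,t) grows linearly: there exist real constants c₁, c₂ > 0 and a natural number t₀ such that for all t ≥ t₀, c₁·t ≤ p_{2t}(4,t) − p_{2t−1}(4,t) ≤ c₂·t. In particular, this difference is unbounded as t → ∞. -/

import Mathlib

/-- `rectPartitions k l m` is the number of integer partitions of `k` fitting in an
`l × m` rectangle: at most `l` parts, each part at most `m`. -/
noncomputable def rectPartitions (k l m : ℕ) : ℕ :=
  Nat.card {π : Nat.Partition k // Multiset.card π.parts ≤ l ∧ ∀ i ∈ π.parts, i ≤ m}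

/-!
Write `q` for the variable. For `t > 0`, `p_{2t}(4,t) - p_{2t-1}(4,t)` is the coefficient at
`q^t` of `1 / ((1 - q²)(1 - q³))`. Indeed, by the product formula for Gaussian binomials,
`(1 - q) binom(4+t,4)_q` is `(1 - q^(t+1) - q^(t+2) - q^(t+3) - q^(t+4)) F` modulo `q^(2t+2)`, with
`F = 1 / ((1 - q²)(1 - q³)(1 - q⁴))`. Hence its coefficient at `q^(2t)` is the coefficient at `q^t`
of `E - (q + q² + q³ + q⁴) F`, where `E` collects the coefficients of `F` of even index.
From `F = (1 + q³) / ((1 - q²)(1 - q⁴)(1 - q⁶))` one reads off `E = 1 / ((1 - q)(1 - q²)(1 - q³))`,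
and `(q + q² + q³ + q⁴) F = q E`, so the difference of the two series is `(1 - q) E`.

The coefficient at `q^t` is also the Cayley–Sylvester count of the degree `t` invariants of a binary
quartic, whose ring of invariants is polynomial on generators of degrees `2` and `3`.
-/

section RectangleRecursion

/-- The partitions of `k` in an `l × m` rectangle, encoded as their multisets of (positive)
parts; unlike in `Nat.Partition k`, adding a part does not change the ambient type. -/
def rectMultisets (k l m : ℕ) : Set (Multiset ℕ) :=
  {s | s.sum = k ∧ s.card ≤ l ∧ ∀ i ∈ s, 0 < i ∧ i ≤ m}

/-- The encoding of partitions in a rectangle as multisets, used to transport cardinalities. -/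
def rectPartitionEquiv (k l m : ℕ) :
    {π : Nat.Partition k // Multiset.card π.parts ≤ l ∧ ∀ i ∈ π.parts, i ≤ m} ≃
      rectMultisets k l m where
  toFun π := ⟨π.1.parts, π.1.parts_sum, π.2.1, fun i hi => ⟨π.1.parts_pos hi, π.2.2 i hi⟩⟩
  invFun s := ⟨⟨s.1, fun {i} hi => (s.2.2.2 i hi).1, s.2.1⟩, s.2.2.1, fun i hi => (s.2.2.2 i hi).2⟩
  left_inv _ := rfl
  right_inv _ := rfl

theorem rectPartitions_eq_ncard (k l m : ℕ) : rectPartitions k l m = (rectMultisets k l m).ncard :=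
  Nat.card_congr (rectPartitionEquiv k l m)

theorem finite_rectMultisets (k l m : ℕ) : (rectMultisets k l m).Finite :=
  Finite.of_equiv _ (rectPartitionEquiv k l m)

theorem rectMultisets_zero (l m : ℕ) : rectMultisets 0 l m = {0} := by
  ext s
  constructor
  · rintro ⟨hsum, -, hparts⟩
    refine Multiset.eq_zero_of_forall_notMem fun i hi => ?_
    exact (hparts i hi).1.ne' (Multiset.sum_eq_zero_iff.1 hsum i hi)
  · rintro rfl
    simp [rectMultisets]

theorem rectMultisets_zero_parts {k : ℕ} (hk : k ≠ 0) (m : ℕ) : rectMultisets k 0 m = ∅ := by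
  refine Set.eq_empty_of_forall_notMem fun s ⟨hsum, hcard, _⟩ => hk ?_
  rw [← hsum, Multiset.card_eq_zero.1 (Nat.le_zero.1 hcard), Multiset.sum_zero]

theorem rectMultisets_zero_size {k : ℕ} (hk : k ≠ 0) (l : ℕ) : rectMultisets k l 0 = ∅ := by
  refine Set.eq_empty_of_forall_notMem fun s ⟨hsum, _, hparts⟩ => hk ?_
  rw [← hsum]
  exact Multiset.sum_eq_zero fun i hi => Nat.le_zero.1 (hparts i hi).2

theorem rectMultisets_succ_of_le {k m : ℕ} (hkm : k ≤ m) (l : ℕ) :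
    rectMultisets k l (m + 1) = rectMultisets k l m := by
  ext s
  constructor
  · rintro ⟨hsum, hcard, hparts⟩
    refine ⟨hsum, hcard, fun i hi => ⟨(hparts i hi).1, ?_⟩⟩
    exact (Multiset.le_sum_of_mem hi).trans (hsum.trans_le hkm)
  · rintro ⟨hsum, hcard, hparts⟩
    exact ⟨hsum, hcard, fun i hi => ⟨(hparts i hi).1, (hparts i hi).2.trans m.le_succ⟩⟩

theorem rectMultisets_add_succ (k l m : ℕ) :
    rectMultisets (k + (m + 1)) (l + 1) (m + 1) =
      rectMultisets (k + (m + 1)) (l + 1) m ∪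
        Multiset.cons (m + 1) '' rectMultisets k l (m + 1) := by
  ext s
  constructor
  · rintro ⟨hsum, hcard, hparts⟩
    by_cases hmem : m + 1 ∈ s
    · obtain ⟨r, rfl⟩ := Multiset.exists_cons_of_mem hmem
      rw [Multiset.sum_cons] at hsum
      rw [Multiset.card_cons] at hcard
      rw [Multiset.forall_mem_cons] at hparts
      exact Or.inr ⟨r, ⟨by omega, by omega, hparts.2⟩, rfl⟩
    · refine Or.inl ⟨hsum, hcard, fun i hi => ⟨(hparts i hi).1, ?_⟩⟩
      exact Nat.le_of_lt_succ ((hparts i hi).2.lt_of_ne (ne_of_mem_of_not_mem hi hmem))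
  · rintro (⟨hsum, hcard, hparts⟩ | ⟨r, ⟨hsum, hcard, hparts⟩, rfl⟩)
    · exact ⟨hsum, hcard, fun i hi => ⟨(hparts i hi).1, (hparts i hi).2.trans m.le_succ⟩⟩
    · refine ⟨?_, ?_, Multiset.forall_mem_cons.2 ⟨⟨m.succ_pos, le_rfl⟩, hparts⟩⟩
      · rw [Multiset.sum_cons, hsum, add_comm]
      · rw [Multiset.card_cons]
        exact Nat.succ_le_succ hcard

theorem rectPartitions_zero (l m : ℕ) : rectPartitions 0 l m = 1 := by
  rw [rectPartitions_eq_ncard, rectMultisets_zero, Set.ncard_singleton]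

theorem rectPartitions_zero_parts {k : ℕ} (hk : k ≠ 0) (m : ℕ) : rectPartitions k 0 m = 0 := by
  rw [rectPartitions_eq_ncard, rectMultisets_zero_parts hk, Set.ncard_empty]

theorem rectPartitions_zero_size {k : ℕ} (hk : k ≠ 0) (l : ℕ) : rectPartitions k l 0 = 0 := by
  rw [rectPartitions_eq_ncard, rectMultisets_zero_size hk, Set.ncard_empty]

theorem rectPartitions_succ_of_le {k m : ℕ} (hkm : k ≤ m) (l : ℕ) :
    rectPartitions k l (m + 1) = rectPartitions k l m := by
  simp only [rectPartitions_eq_ncard, rectMultisets_succ_of_le hkm]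

theorem rectPartitions_add_succ (k l m : ℕ) :
    rectPartitions (k + (m + 1)) (l + 1) (m + 1) =
      rectPartitions (k + (m + 1)) (l + 1) m + rectPartitions k l (m + 1) := by
  have hdisj : Disjoint (rectMultisets (k + (m + 1)) (l + 1) m)
      (Multiset.cons (m + 1) '' rectMultisets k l (m + 1)) := by
    rw [Set.disjoint_left]
    rintro _ ⟨-, -, hparts⟩ ⟨r, -, rfl⟩
    exact m.not_succ_le_self (hparts (m + 1) (Multiset.mem_cons_self _ _)).2
  simp only [rectPartitions_eq_ncard, rectMultisets_add_succ]
  rw [Set.ncard_union_eq hdisj (finite_rectMultisets _ _ _) ((finite_rectMultisets _ _ _).image _),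
    Set.ncard_image_of_injective _ fun _ _ => (Multiset.cons_inj_right _).1]

end RectangleRecursion

section GeneratingSeries

open PowerSeries
open Finset hiding mk

variable {R : Type*} [CommRing R]

/-- The Gaussian binomial coefficient `binom(l+m, m)_q`, as the generating function of the
partitions in an `l × m` rectangle. It is a polynomial, but is taken as a power series so that
the denominators of its product formula can be inverted. -/
noncomputable def gaussianSeries (R : Type*) [CommRing R] (l m : ℕ) : R⟦X⟧ :=
  mk fun k => (rectPartitions k l m : R)

theorem gaussianSeries_zero_left (m : ℕ) : gaussianSeries R 0 m = 1 := by
  ext k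
  rcases eq_or_ne k 0 with rfl | hk
  · simp [gaussianSeries, rectPartitions_zero]
  · simp [gaussianSeries, rectPartitions_zero_parts hk, coeff_one, hk]

theorem gaussianSeries_zero_right (l : ℕ) : gaussianSeries R l 0 = 1 := by
  ext k
  rcases eq_or_ne k 0 with rfl | hk
  · simp [gaussianSeries, rectPartitions_zero]
  · simp [gaussianSeries, rectPartitions_zero_size hk, coeff_one, hk]

theorem gaussianSeries_succ_succ (l m : ℕ) :
    gaussianSeries R (l + 1) (m + 1) =
      gaussianSeries R (l + 1) m + X ^ (m + 1) * gaussianSeries R l (m + 1) := by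
  ext k
  simp only [gaussianSeries, coeff_mk, map_add, coeff_X_pow_mul']
  split_ifs with hk
  · obtain ⟨j, rfl⟩ := Nat.exists_eq_add_of_le' hk
    rw [rectPartitions_add_succ, Nat.add_sub_cancel, Nat.cast_add]
  · rw [rectPartitions_succ_of_le (by omega), add_zero]

theorem coeff_one_sub_X_mul_gaussianSeries {n : ℕ} (hn : n ≠ 0) (l m : ℕ) :
    coeff n ((1 - X) * gaussianSeries R l m) =
      (rectPartitions n l m : R) - rectPartitions (n - 1) l m := by
  obtain ⟨k, rfl⟩ := Nat.exists_eq_succ_of_ne_zero hn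
  simp [gaussianSeries, sub_mul, coeff_succ_X_mul]

theorem prod_mul_gaussianSeries (l m : ℕ) :
    (∏ i ∈ range l, (1 - X ^ (i + 1))) * gaussianSeries R l m =
      ∏ i ∈ range l, (1 - X ^ (m + (i + 1))) := by
  induction l generalizing m with
  | zero => simp [gaussianSeries_zero_left]
  | succ l ihl =>
    induction m with
    | zero => simp [gaussianSeries_zero_right]
    | succ m ihm =>
      have hshift : ∏ i ∈ range (l + 1), (1 - X ^ (m + (i + 1)) : R⟦X⟧) =
          (∏ i ∈ range l, (1 - X ^ (m + 1 + (i + 1)))) * (1 - X ^ (m + 1)) := by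
        simp only [prod_range_succ', add_right_comm m 1, add_assoc, zero_add]
      rw [hshift, prod_range_succ] at ihm
      rw [gaussianSeries_succ_succ, prod_range_succ, prod_range_succ]
      linear_combination ihm + X ^ (m + 1) * (1 - X ^ (l + 1)) * ihl (m + 1)

theorem sq_dvd_prod_one_sub_sub_one_sub_sum {S ι : Type*} [CommRing S] {d : S} {a : ι → S}
    {s : Finset ι} (h : ∀ i ∈ s, d ∣ a i) :
    d ^ 2 ∣ (∏ i ∈ s, (1 - a i)) - (1 - ∑ i ∈ s, a i) := by
  induction s using Finset.cons_induction with
  | empty => simp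
  | cons j s hj ih =>
    rw [forall_mem_cons] at h
    have hcross : d ^ 2 ∣ a j * ∑ i ∈ s, a i := sq d ▸ mul_dvd_mul h.1 (dvd_sum h.2)
    rw [prod_cons, sum_cons]
    convert ((ih h.2).mul_left (1 - a j)).add hcross using 1
    ring

theorem coeff_mul_gaussianSeries {l : ℕ} {H : R⟦X⟧}
    (hH : (∏ i ∈ range l, (1 - X ^ (i + 1))) * H = 1) (A : R⟦X⟧) {m n : ℕ} (hn : n < 2 * (m + 1)) :
    coeff n (A * gaussianSeries R l m) =
      coeff n ((1 - ∑ i ∈ range l, X ^ (m + (i + 1))) * (A * H)) := by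
  have hprod : gaussianSeries R l m = (∏ i ∈ range l, (1 - X ^ (m + (i + 1)))) * H := by
    linear_combination H * prod_mul_gaussianSeries (R := R) l m - gaussianSeries R l m * hH
  have hdvd : (X : R⟦X⟧) ^ (2 * (m + 1)) ∣
      (∏ i ∈ range l, (1 - X ^ (m + (i + 1)))) - (1 - ∑ i ∈ range l, X ^ (m + (i + 1))) := by
    rw [mul_comm, pow_mul]
    exact sq_dvd_prod_one_sub_sub_one_sub_sum fun i _ => pow_dvd_pow X (by omega)
  rw [← sub_eq_zero, ← map_sub, hprod]
  refine X_pow_dvd_iff.1 ?_ n hn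
  convert hdvd.mul_right (A * H) using 1
  ring

/-- The power series whose `n`-th coefficient is the `(p * n)`-th coefficient of `φ`; for `p = 2`
this is the even part of `φ` in the variable `X ^ 2`. -/
noncomputable def decimate (p : ℕ) (φ : R⟦X⟧) : R⟦X⟧ :=
  mk fun n => coeff (p * n) φ

theorem decimate_expand_mul {p : ℕ} (hp : p ≠ 0) (φ ψ : R⟦X⟧) :
    decimate p (expand p hp φ * ψ) = φ * decimate p ψ := by
  ext n
  rw [decimate, coeff_mk, coeff_mul, coeff_mul]
  symm
  refine sum_of_injOn (fun x => (p * x.1, p * x.2)) ?_ ?_ ?_ ?_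
  · intro x _ y _ hxy
    simpa [Prod.ext_iff, hp] using hxy
  · intro x hx
    simp only [mem_coe, HasAntidiagonal.mem_antidiagonal] at hx ⊢
    rw [← Nat.mul_add, hx]
  · rintro ⟨i, j⟩ hij hnot
    suffices ¬ p ∣ i by rw [coeff_expand_of_not_dvd p hp _ this, zero_mul]
    rintro ⟨a, rfl⟩
    rw [HasAntidiagonal.mem_antidiagonal] at hij
    obtain ⟨b, rfl⟩ : p ∣ j := (Nat.dvd_add_right ⟨a, rfl⟩).1 ⟨n, hij⟩
    rw [← mul_add] at hij
    exact hnot ⟨(a, b), by simpa using Nat.eq_of_mul_eq_mul_left (Nat.pos_of_ne_zero hp) hij, rfl⟩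
  · intro x _
    rw [coeff_expand_mul, decimate, coeff_mk]

theorem mul_decimate_two_eq_one {F : R⟦X⟧} (hF : (1 - X ^ 2) * (1 - X ^ 3) * (1 - X ^ 4) * F = 1) :
    (1 - X) * (1 - X ^ 2) * (1 - X ^ 3) * decimate 2 F = 1 := by
  have hexpand : expand 2 two_ne_zero ((1 - X) * (1 - X ^ 2) * (1 - X ^ 3)) * F = 1 + X ^ 3 := by
    simp only [map_mul, map_sub, map_one, map_pow, expand_X]
    linear_combination (1 + X ^ 3) * hF
  rw [← decimate_expand_mul two_ne_zero, hexpand]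
  ext n
  have hodd : 2 * n ≠ 3 := by omega
  simp [decimate, coeff_one, coeff_X_pow, hodd]

theorem mul_mk_coeff_middle_eq_one :
    (1 - X ^ 2) * (1 - X ^ 3) * mk (fun t => coeff (2 * t) ((1 - X) * gaussianSeries R 4 t)) =
      1 := by
  obtain ⟨H, hH⟩ : ∃ H : R⟦X⟧, (∏ i ∈ range 4, (1 - X ^ (i + 1))) * H = 1 :=
    (isUnit_iff_constantCoeff.2 (by simp [map_prod])).exists_right_inv
  let F := (1 - X) * H
  have hF : (1 - X ^ 2) * (1 - X ^ 3) * (1 - X ^ 4) * F = 1 :=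
    calc
      _ = (∏ i ∈ range 4, (1 - X ^ (i + 1))) * H := by
        simp only [prod_range_succ, prod_range_zero]
        ring
      _ = 1 := hH
  have hmiddle : mk (fun t => coeff (2 * t) ((1 - X) * gaussianSeries R 4 t)) =
      decimate 2 F - (∑ i ∈ range 4, X ^ (i + 1)) * F := by
    ext t
    have hshift : (1 - ∑ i ∈ range 4, X ^ (t + (i + 1))) * F =
        F - X ^ t * ((∑ i ∈ range 4, X ^ (i + 1)) * F) := by
      simp only [pow_add _ t, ← mul_sum]
      ring
    rw [coeff_mk, coeff_mul_gaussianSeries hH _ (by omega), hshift, map_sub, map_sub, decimate,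
      coeff_mk, two_mul t, coeff_X_pow_mul]
  have hunit : IsUnit (1 - X : R⟦X⟧) := isUnit_iff_constantCoeff.2 (by simp)
  refine hunit.mul_left_cancel ?_
  rw [hmiddle]
  simp only [sum_range_succ, sum_range_zero]
  linear_combination mul_decimate_two_eq_one hF - X * hF

theorem mul_mk_div_six_eq_one :
    (1 - X ^ 2) * (1 - X ^ 3) * mk (fun n : ℕ => (n / 6 + if n % 6 = 1 then 0 else 1 : ℤ)) = 1 := by
  set φ := mk fun n : ℕ => (n / 6 + if n % 6 = 1 then 0 else 1 : ℤ) with hφ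
  have hexpand : (1 - X ^ 2) * (1 - X ^ 3) * φ = φ - X ^ 2 * φ - X ^ 3 * φ + X ^ 5 * φ := by ring
  rw [hexpand]
  ext n
  simp only [hφ, map_add, map_sub, coeff_X_pow_mul', coeff_mk, coeff_one]
  split_ifs <;> omega

theorem rectPartitions_middle_sub {t : ℕ} (ht : t ≠ 0) :
    (rectPartitions (2 * t) 4 t : ℤ) - rectPartitions (2 * t - 1) 4 t =
      t / 6 + if t % 6 = 1 then 0 else 1 := by
  have hdenom : (1 - X ^ 2) * (1 - X ^ 3) ≠ (0 : ℤ⟦X⟧) :=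
    left_ne_zero_of_mul_eq_one mul_mk_div_six_eq_one
  have hseries := mul_left_cancel₀ hdenom
    (mul_mk_coeff_middle_eq_one.trans mul_mk_div_six_eq_one.symm)
  rw [← coeff_one_sub_X_mul_gaussianSeries (by omega)]
  simpa only [coeff_mk] using congrArg (coeff t) hseries

end GeneratingSeries

/-- The difference `p_{2t}(4,t) − p_{2t−1}(4,t)` grows linearly in `t`: there exist
constants `c₁, c₂ > 0` and `t₀` such that for all `t ≥ t₀`,
`c₁·t ≤ p_{2t}(4,t) − p_{2t−1}(4,t) ≤ c₂·t`. -/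
theorem qbinomial_diff_linear_growth :
    ∃ c₁ c₂ : ℝ, c₁ > 0 ∧ c₂ > 0 ∧ ∃ t₀ : ℕ, ∀ t : ℕ, t₀ ≤ t →
      c₁ * (t : ℝ) ≤ ((rectPartitions (2 * t) 4 t : ℝ) - (rectPartitions (2 * t - 1) 4 t : ℝ)) ∧
      ((rectPartitions (2 * t) 4 t : ℝ) - (rectPartitions (2 * t - 1) 4 t : ℝ)) ≤ c₂ * (t : ℝ) := by
  refine ⟨1 / 12, 1, by norm_num, by norm_num, 2, fun t ht => ?_⟩
  have hdiff := rectPartitions_middle_sub (t := t) (by omega)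
  have hlower : (t : ℤ) ≤
      12 * ((rectPartitions (2 * t) 4 t : ℤ) - rectPartitions (2 * t - 1) 4 t) := by
    split_ifs at hdiff <;> omega
  have hupper : (rectPartitions (2 * t) 4 t : ℤ) - rectPartitions (2 * t - 1) 4 t ≤ t := by
    split_ifs at hdiff <;> omega
  rify at hlower hupper
  constructor <;> linarith
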